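/- arXiv:1408.7035 — 7 statements merged into one kernel-verified Lean document; each statement's English description precedes it below -/
import Mathlib

section
/- Under the protocol model, suppose a ≤ b and the failure pattern is unstable exactly on rounds a through b, i.e., fail r ≠ ∅ for every r with a ≤ r ≤ b and fail r = ∅ for every r outside [a, b]. Then: (i) for every round r ≠ a+1 and all vehicles i, j, out i r = out j r (the uncertainty period is bounded by one round); (ii) for every round r with a+2 ≤ r ≤ b+1 and every vehicle i, out i r = none (disagreement correction: all vehicles use the default value); and (iii) for every round r ≥ b+3 and every vehicle i, out i r = decide (fun j => some (input j (r-1))) (after communication stabilizes, within one round of correction the protocol behaves as if no communication failure ever occurred). -/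
/-- Round-r message vector: `none` if the sender missed a message in the
previous round (for `r ≥ 1`), otherwise the sender's input of round `r`. -/
def msg {n : ℕ} {α : Type*} (input : Fin n → ℕ → α) (fail : ℕ → Finset (Fin n))
    (r : ℕ) (j : Fin n) : Option α :=
  if 1 ≤ r ∧ j ∈ fail (r - 1) then none else some (input j r)

/-- Value used by vehicle `i` at each round. -/
def out {n : ℕ} {α : Type*} (input : Fin n → ℕ → α)
    (dec : (Fin n → Option α) → Option α) (fail : ℕ → Finset (Fin n))
    (i : Fin n) : ℕ → Option α
  | 0 => none
  | r + 1 => if i ∈ fail r then none else dec (msg input fail r)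
theorem stmt0 {n : ℕ} {α : Type*} (input : Fin n → ℕ → α)
    (dec : (Fin n → Option α) → Option α)
    (hdec : ∀ s : Fin n → Option α, none ∈ Set.range s → dec s = none)
    (fail : ℕ → Finset (Fin n)) (a b : ℕ) (hab : a ≤ b)
    (hunstable : ∀ r, a ≤ r → r ≤ b → fail r ≠ ∅)
    (hstable : ∀ r, ¬ (a ≤ r ∧ r ≤ b) → fail r = ∅) :
    (∀ r, r ≠ a + 1 → ∀ i j : Fin n,
        out input dec fail i r = out input dec fail j r) ∧
    (∀ r, a + 2 ≤ r → r ≤ b + 1 → ∀ i : Fin n,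
        out input dec fail i r = none) ∧
    (∀ r, b + 3 ≤ r → ∀ i : Fin n,
        out input dec fail i r = dec (fun j => some (input j (r - 1)))) := by
  have h2 : ∀ r, a + 2 ≤ r → r ≤ b + 1 → ∀ i : Fin n,
      out input dec fail i r = none := by
    intro r h1 h2 i
    obtain ⟨k, rfl⟩ : ∃ k, r = k + 2 := ⟨r - 2, by omega⟩
    obtain ⟨j, hj⟩ := Finset.nonempty_iff_ne_empty.mpr
      (hunstable k (by omega) (by omega))
    have hd : dec (msg input fail (k + 1)) = none :=
      hdec _ ⟨j, by simp [msg, hj]⟩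
    simp [out, hd]
  refine ⟨?_, h2, ?_⟩
  · intro r hr i j
    by_cases h : a + 2 ≤ r ∧ r ≤ b + 1
    · rw [h2 r h.1 h.2 i, h2 r h.1 h.2 j]
    · cases r with
      | zero => rfl
      | succ k =>
        have hk : fail k = ∅ := hstable k (by omega)
        simp [out, hk]
  · intro r hr i
    obtain ⟨k, rfl⟩ : ∃ k, r = k + 2 := ⟨r - 2, by omega⟩
    have hk : fail k = ∅ := hstable k (by omega)
    have hk1 : fail (k + 1) = ∅ := hstable (k + 1) (by omega)
    have hm : msg input fail (k + 1) = fun j => some (input j (k + 1)) := by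
      funext j
      simp [msg, hk]
    simp [out, hk1, hm]
end

section
/- Under the protocol model, let a ≤ b ≤ c and suppose fail r ≠ ∅ for every round r with a ≤ r ≤ b, and fail r = ∅ for every round r with b+1 ≤ r ≤ c (a maximal unstable period [a, b] followed by a stable period [b+1, c]). Then for every round r with a+2 ≤ r ≤ c+1 and all vehicles i, j, out i r = out j r; that is, no two vehicles use different values during the rounds a+2 through c+1. -/
theorem stmt1 {n : ℕ} {α : Type*} (input : Fin n → ℕ → α)
    (dec : (Fin n → Option α) → Option α)
    (hdec : ∀ s : Fin n → Option α, none ∈ Set.range s → dec s = none)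
    (fail : ℕ → Finset (Fin n)) (a b c : ℕ) (hab : a ≤ b) (hbc : b ≤ c)
    (hunstable : ∀ r, a ≤ r → r ≤ b → fail r ≠ ∅)
    (hstable : ∀ r, b + 1 ≤ r → r ≤ c → fail r = ∅) :
    ∀ r, a + 2 ≤ r → r ≤ c + 1 → ∀ i j : Fin n,
      out input dec fail i r = out input dec fail j r := by
  intro r h1 h2 i j
  obtain ⟨k, rfl⟩ : ∃ k, r = k + 2 := ⟨r - 2, by omega⟩
  by_cases hk : k ≤ b
  · obtain ⟨x, hx⟩ := Finset.nonempty_iff_ne_empty.mpr (hunstable k (by omega) hk)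
    have hd : dec (msg input fail (k + 1)) = none :=
      hdec _ ⟨x, by simp [msg, hx]⟩
    simp [out, hd]
  · have hf := hstable (k + 1) (by omega) (by omega)
    simp [out, hf]
end

section
/- Under the protocol model, suppose a ≤ b and the failure pattern is unstable exactly on rounds a through b, i.e., fail r ≠ ∅ for every r with a ≤ r ≤ b and fail r = ∅ for every r outside [a, b]. Then disagreement is possible only at round a+1: for every round r ≠ a+1 and all vehicles i, j, out i r = out j r. -/
theorem stmt3 {n : ℕ} {α : Type*} (input : Fin n → ℕ → α)
    (dec : (Fin n → Option α) → Option α)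
    (hdec : ∀ s : Fin n → Option α, none ∈ Set.range s → dec s = none)
    (fail : ℕ → Finset (Fin n)) (a b : ℕ) (hab : a ≤ b)
    (hunstable : ∀ r, a ≤ r → r ≤ b → fail r ≠ ∅)
    (hstable : ∀ r, ¬ (a ≤ r ∧ r ≤ b) → fail r = ∅) :
    ∀ r, r ≠ a + 1 → ∀ i j : Fin n,
      out input dec fail i r = out input dec fail j r := by
  intro r hr i j
  cases r with
  | zero => rfl
  | succ r =>
    by_cases h : a ≤ r ∧ r ≤ b
    · have hlt : a < r := by omega
      obtain ⟨k, hk⟩ := Finset.nonempty_iff_ne_empty.mpr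
        (hunstable (r - 1) (by omega) (by omega))
      have hd : dec (msg input fail r) = none := by
        apply hdec
        refine ⟨k, ?_⟩
        unfold msg
        exact if_pos ⟨by omega, hk⟩
      simp [out, hd]
    · simp [out, hstable r h]
end

section
/- In the intra-round gossip model, the following invariant holds in every reachable state: for all vehicles i and all indices k, if A i k holds then D i k = some (v k). In other words, whenever a vehicle acknowledges having received (directly or transitively) vehicle k's datum of the current round, the datum it stores for k is exactly the datum that k originally sent; message transitivity maintains the consistency of the messages. -/
/-- Intra-round gossip network state: data arrays and acknowledgement arrays. -/
structure GState (n : ℕ) (α : Type*) where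
  D : Fin n → Fin n → Option α
  A : Fin n → Fin n → Bool

/-- Initial state: each vehicle holds only its own datum. -/
def initState {n : ℕ} {α : Type*} (v : Fin n → α) : GState n α where
  D := fun i k => if k = i then some (v i) else none
  A := fun i k => decide (k = i)

/-- Delivery event `(j, i)`: vehicle `i` receives vehicle `j`'s arrays and merges. -/
def deliver {n : ℕ} {α : Type*} (s : GState n α) (j i : Fin n) : GState n α where
  D := fun i' k =>
    if i' = i ∧ ((s.A j k = true ∧ k ≠ i) ∨ k = j) then s.D j k else s.D i' k
  A := fun i' k =>
    if i' = i ∧ ((s.A j k = true ∧ k ≠ i) ∨ k = j) then true else s.A i' k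

/-- One network step: some delivery event between distinct vehicles. -/
def gstep {n : ℕ} {α : Type*} (s t : GState n α) : Prop :=
  ∃ j i : Fin n, j ≠ i ∧ t = deliver s j i

/-- Reachability from the initial state by finitely many delivery events. -/
def reachable {n : ℕ} {α : Type*} (v : Fin n → α) (s : GState n α) : Prop :=
  Relation.ReflTransGen gstep (initState v) s
theorem stmt8 {n : ℕ} {α : Type*} (v : Fin n → α) (s : GState n α)
    (hs : reachable v s) :
    ∀ i k : Fin n, s.A i k = true → s.D i k = some (v k) := by
  have key : (∀ i, s.A i i = true) ∧
      ∀ i k : Fin n, s.A i k = true → s.D i k = some (v k) := by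
    unfold reachable at hs
    induction hs with
    | refl =>
      refine ⟨fun i => by simp [initState], fun i k h => ?_⟩
      have h' : k = i := by simpa [initState] using h
      subst h'
      simp [initState]
    | tail _ hst ih =>
      obtain ⟨j, i, _, rfl⟩ := hst
      obtain ⟨h1, h2⟩ := ih
      refine ⟨fun a => ?_, fun a k h => ?_⟩
      · simp only [deliver]
        split_ifs
        · rfl
        · exact h1 a
      · simp only [deliver] at h ⊢
        split_ifs at h ⊢ with hc
        · rcases hc.2 with hk | hk
          · exact h2 j k hk.1
          · subst hk
            exact h2 k k (h1 k)
        · exact h2 a k h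
  exact key.2
end

section
/- In the intra-round gossip model, in any reachable state in which every vehicle has acknowledged every index (A i k = true for all i and k), every vehicle's data array equals the vector of originally sent values: D i k = some (v k) for all i and k. In particular, all vehicles hold identical data arrays, i.e., D i = D j for all vehicles i, j; hence in a stable communication round, in which all messages are received, all vehicles end the round with the same proposed set of values. -/
theorem gossip_inv {n : ℕ} {α : Type*} (v : Fin n → α) (s : GState n α)
    (hs : reachable v s) :
    (∀ i : Fin n, s.A i i = true) ∧ (∀ i k : Fin n, s.A i k = true → s.D i k = some (v k)) := by
  unfold reachable at hs
  induction hs with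
  | refl =>
    constructor
    · intro i
      simp [initState]
    · intro i k h
      have hk : k = i := by simpa [initState] using h
      subst hk
      simp [initState]
  | tail _ hst ih =>
    obtain ⟨j, i, hji, rfl⟩ := hst
    obtain ⟨h1, h2⟩ := ih
    constructor
    · intro i'
      simp only [deliver]
      split_ifs
      · rfl
      · exact h1 i'
    · intro i' k h
      simp only [deliver] at h ⊢
      split_ifs at h ⊢ with hc
      · rcases hc.2 with hk | hk
        · exact h2 j k hk.1
        · subst hk
          exact h2 k k (h1 k)
      · exact h2 i' k h

theorem stmt9 {n : ℕ} {α : Type*} (v : Fin n → α) (s : GState n α)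
    (hs : reachable v s) (hall : ∀ i k : Fin n, s.A i k = true) :
    (∀ i k : Fin n, s.D i k = some (v k)) ∧
    (∀ i j : Fin n, s.D i = s.D j) := by
  have H := (gossip_inv v s hs).2
  refine ⟨fun i k => H i k (hall i k), fun i j => funext fun k => ?_⟩
  rw [H i k (hall i k), H j k (hall j k)]
end

section
/- In the intra-round gossip model, every vehicle maintains its own information consistent throughout the round: in every reachable state and for every vehicle i, D i i = some (v i) and A i i = true. That is, the merge rule never overwrites a vehicle's own entry with a value different from the one it originally sent. -/
theorem stmt10 {n : ℕ} {α : Type*} (v : Fin n → α) (s : GState n α)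
    (hs : reachable v s) :
    ∀ i : Fin n, s.D i i = some (v i) ∧ s.A i i = true := by
  unfold reachable at hs
  induction hs with
  | refl => intro i; simp [initState]
  | @tail b c _ h ih =>
    obtain ⟨j, i, hji, rfl⟩ := h
    intro k
    have hk : ¬ (k = i ∧ ((b.A j k = true ∧ k ≠ i) ∨ k = j)) := by
      rintro ⟨rfl, ⟨_, h⟩ | h⟩
      · exact h rfl
      · exact hji h.symm
    simp only [deliver]
    rw [if_neg hk, if_neg hk]
    exact ih k
end

section
/- Round alignment of message deliveries: let L, D, b : ℝ with 0 ≤ b, 0 ≤ D, and L > 2*b + D, and let o : ι → ℝ be clock offsets for a family of vehicles (vehicle i's clock at real time t reads t + o i) satisfying |o i - o j| ≤ b for all i, j. Suppose vehicle i sends a message at real time t whose sender clock reading satisfies R*L + b ≤ t + o i and t + o i < (R+1)*L - b - D for some R : ℕ, and vehicle j receives the message at a real time t' with t ≤ t' ≤ t + D. Then R*L ≤ t' + o j < (R+1)*L; consequently ⌊(t' + o j)/L⌋ = R, i.e., the receiver's clock places the receipt in the same round R in which the message was sent, so vehicles receive messages only from the current round. -/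
theorem stmt11 {ι : Type*} (L D b : ℝ) (hb : 0 ≤ b) (hD : 0 ≤ D)
    (hL : L > 2 * b + D) (o : ι → ℝ) (ho : ∀ i j, |o i - o j| ≤ b)
    (i j : ι) (t t' : ℝ) (R : ℕ)
    (hsend1 : R * L + b ≤ t + o i)
    (hsend2 : t + o i < (R + 1) * L - b - D)
    (hrecv1 : t ≤ t') (hrecv2 : t' ≤ t + D) :
    ((R : ℝ) * L ≤ t' + o j ∧ t' + o j < (R + 1) * L) ∧
      ⌊(t' + o j) / L⌋ = (R : ℤ) := by
  have h := abs_le.mp (ho i j)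
  obtain ⟨h1, h2⟩ := h
  have hLpos : 0 < L := by linarith
  have hlo : (R : ℝ) * L ≤ t' + o j := by linarith
  have hhi : t' + o j < (R + 1) * L := by linarith
  refine ⟨⟨hlo, hhi⟩, ?_⟩
  rw [Int.floor_eq_iff]
  push_cast
  exact ⟨(le_div_iff₀ hLpos).mpr hlo, (div_lt_iff₀ hLpos).mpr hhi⟩
end
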